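/- For every odd integer n ≥ 5, there is no entropy of mixing S : Ω_n → ℝ. -/

import Mathlib

open Real

noncomputable section

/-- The ambient vector space ℝ³. -/
abbrev V3 : Type := Fin 3 → ℝ

/-- The linear functional on ℝ³ given by the Euclidean inner product with `v`. -/
def dotL (v : V3) : V3 →ₗ[ℝ] ℝ :=
  ∑ i, v i • (LinearMap.proj i : V3 →ₗ[ℝ] ℝ)

/-- The unit effect `u (x, y, z) = z`. -/
def uEff : V3 →ₗ[ℝ] ℝ := LinearMap.proj 2

/-- `e` is an effect on `Ω`: a linear functional with values in `[0,1]` on `Ω`. -/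
def IsEffect (Ω : Set V3) (e : V3 →ₗ[ℝ] ℝ) : Prop :=
  ∀ ω ∈ Ω, 0 ≤ e ω ∧ e ω ≤ 1

/-- The states `ω 0, …, ω (l-1)` are perfectly distinguishable in `Ω`:
there are effects summing to the unit effect with `e i (ω j) = δ_{ij}`. -/
def PerfDist (Ω : Set V3) {l : ℕ} (ω : Fin l → V3) : Prop :=
  ∃ e : Fin l → (V3 →ₗ[ℝ] ℝ),
    (∀ i, IsEffect Ω (e i)) ∧ (∑ i, e i) = uEff ∧
    ∀ i j, e i (ω j) = if i = j then 1 else 0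

/-- `S` is an entropy of mixing on `Ω`: it vanishes on extreme points, and for every
finite family of perfectly distinguishable states and every probability weight,
`S (Σ pᵢ ωᵢ) = Σ pᵢ S(ωᵢ) − Σ pᵢ log pᵢ` (note `Real.log 0 = 0`, so `0 log 0 = 0`). -/
def IsEntropyOfMixing (Ω : Set V3) (S : V3 → ℝ) : Prop :=
  (∀ ω ∈ Set.extremePoints ℝ Ω, S ω = 0) ∧
  ∀ (l : ℕ) (ω : Fin l → V3), (∀ j, ω j ∈ Ω) → PerfDist Ω ω →
    ∀ p : Fin l → ℝ, (∀ i, 0 ≤ p i) → (∑ i, p i) = 1 →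
      S (∑ i, p i • ω i) = (∑ i, p i * S (ω i)) - ∑ i, p i * Real.log (p i)

/-- `r_n = √(1 / cos (π/n))`. -/
def rn (n : ℕ) : ℝ := Real.sqrt (1 / Real.cos (π / n))

/-- The pure states `ω_i^n` of the `n`-gon theory (indices mod `n` via periodicity). -/
def pur (n : ℕ) (i : ℤ) : V3 :=
  ![rn n * Real.cos (2 * π * i / n), rn n * Real.sin (2 * π * i / n), 1]

/-- The `n`-gon state space `Ω_n`: the convex hull of the `n` pure states. -/
def Omega (n : ℕ) : Set V3 :=
  convexHull ℝ {x : V3 | ∃ i : Fin n, x = pur n (i : ℤ)}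

/-- The extreme effect `e_i^n` for even `n`. -/
def effE (n : ℕ) (i : ℤ) : V3 →ₗ[ℝ] ℝ :=
  dotL ((1/2 : ℝ) •
    ![rn n * Real.cos ((2*i-1) * π / n), rn n * Real.sin ((2*i-1) * π / n), 1])

/-- The extreme effect `e_i^n` for odd `n`. -/
def effO (n : ℕ) (i : ℤ) : V3 →ₗ[ℝ] ℝ :=
  dotL ((1/(1 + rn n ^ 2)) •
    ![rn n * Real.cos (2*i*π/n), rn n * Real.sin (2*i*π/n), 1])

/-- The disk state space `Ω_∞ = {(x,y,1) : x² + y² ≤ 1}`. -/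
def OmegaInf : Set V3 := {x : V3 | x 2 = 1 ∧ (x 0)^2 + (x 1)^2 ≤ 1}

/-- The pure states `ω_θ^∞` of the disk theory. -/
def purInf (θ : ℝ) : V3 := ![Real.cos θ, Real.sin θ, 1]

/-- The extreme effects `e_θ^∞` of the disk theory. -/
def effInf (θ : ℝ) : V3 →ₗ[ℝ] ℝ :=
  dotL ((1/2 : ℝ) • ![Real.cos θ, Real.sin θ, 1])

/-- The binary (1-bit Shannon) entropy `H(p) = −p log p − (1−p) log (1−p)`. -/
def H (p : ℝ) : ℝ := -(p * Real.log p) - (1 - p) * Real.log (1 - p)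

lemma effO_apply (n : ℕ) (i : ℤ) (x : V3) :
    effO n i x = (1/(1 + rn n ^ 2)) *
      (rn n * Real.cos (2*i*π/n) * x 0 + rn n * Real.sin (2*i*π/n) * x 1 + x 2) := by
  simp [effO, dotL, Fin.sum_univ_three]
  ring

lemma cos_pi_div_pos (n : ℕ) (hn : 5 ≤ n) : 0 < Real.cos (π / n) := by
  have h5 : (5:ℝ) ≤ n := by exact_mod_cast hn
  have hp := Real.pi_pos
  apply Real.cos_pos_of_mem_Ioo
  constructor
  · have : 0 < π / n := by positivity
    linarith
  · rw [div_lt_div_iff₀ (by linarith) (by norm_num)]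
    nlinarith

lemma rn_sq (n : ℕ) (hn : 5 ≤ n) : rn n ^ 2 = 1 / Real.cos (π / n) := by
  have := cos_pi_div_pos n hn
  rw [rn, Real.sq_sqrt (by positivity)]

lemma effO_pur (n : ℕ) (i j : ℤ) :
    effO n i (pur n j) = (1/(1 + rn n ^ 2)) *
      (rn n ^ 2 * Real.cos (2*π*(i-j : ℤ)/n) + 1) := by
  have : (2*π*((i-j : ℤ) : ℝ)/n) = 2*i*π/n - 2 * π * j / n := by push_cast; ring
  rw [effO_apply, this, Real.cos_sub]
  simp [pur]
  ring_nf
  simp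

lemma cos_ge (n : ℕ) (hn : 5 ≤ n) (hodd : Odd n) (k : ℤ) (hk : |k| < n) :
    - Real.cos (π / n) ≤ Real.cos (2*π*k/n) := by
  have h5 : (5:ℝ) ≤ n := by exact_mod_cast hn
  have hp := Real.pi_pos
  have e1 : Real.cos (2*π*k/n) = Real.cos (2*π*(|k| : ℤ)/n) := by
    rcases abs_choice k with h | h <;> rw [h]
    push_cast
    rw [← Real.cos_neg]
    congr 1; ring
  have hk0 : 0 ≤ |k| := abs_nonneg k
  rw [e1]
  generalize |k| = l at hk hk0
  have e2 : Real.cos (2*π*l/n) = - Real.cos (|π * ((2*l-n : ℤ):ℝ)/n|) := by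
    rw [Real.cos_abs, ← Real.cos_add_pi]
    congr 1
    push_cast
    field_simp
    ring
  rw [e2]
  apply neg_le_neg
  have e3 : |π * ((2*l-n : ℤ):ℝ)/n| = π * ((|2*l-n| : ℤ):ℝ)/n := by
    rw [abs_div, abs_mul, abs_of_pos hp, abs_of_pos (by linarith : (0:ℝ) < n)]
    push_cast; rfl
  rw [e3]
  have b1 : 1 ≤ |2*l-(n:ℤ)| := by
    apply Int.one_le_abs
    obtain ⟨m, rfl⟩ := hodd
    push_cast; omega
  have b2 : |2*l-(n:ℤ)| ≤ n := by rw [abs_le]; constructor <;> omega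
  generalize |2*l-(n:ℤ)| = t at b1 b2
  have b1' : (1:ℝ) ≤ t := by exact_mod_cast b1
  have b2' : (t:ℝ) ≤ n := by exact_mod_cast b2
  apply Real.cos_le_cos_of_nonneg_of_le_pi
  · positivity
  · rw [div_le_iff₀ (by linarith)]; nlinarith
  · gcongr; nlinarith

lemma Omega_z (n : ℕ) (x : V3) (hx : x ∈ Omega n) :
    x 2 = 1 ∧ x 0 ^ 2 + x 1 ^ 2 ≤ rn n ^ 2 := by
  have hc : Convex ℝ {x : V3 | x 2 = 1 ∧ x 0 ^ 2 + x 1 ^ 2 ≤ rn n ^ 2} := by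
    rintro x ⟨hx, hx'⟩ y ⟨hy, hy'⟩ a b ha hb hab
    constructor
    · simp [hx, hy, hab]
    · simp only [Pi.add_apply, Pi.smul_apply, smul_eq_mul]
      obtain rfl : b = 1 - a := by linarith
      nlinarith [mul_nonneg (mul_nonneg ha hb) (sq_nonneg (x 0 - y 0)),
        mul_nonneg (mul_nonneg ha hb) (sq_nonneg (x 1 - y 1)),
        mul_le_mul_of_nonneg_left hx' ha, mul_le_mul_of_nonneg_left hy' hb]
  refine convexHull_min ?_ hc hx
  rintro _ ⟨i, rfl⟩
  constructor
  · simp [pur]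
  · simp only [pur, Matrix.cons_val_zero, Matrix.cons_val_one]
    have := Real.sin_sq_add_cos_sq (2 * π * (i:ℤ) / n)
    apply le_of_eq
    linear_combination (rn n ^ 2) * this

lemma pur_mem (n : ℕ) (j : ℤ) (h0 : 0 ≤ j) (h1 : j < n) : pur n j ∈ Omega n := by
  apply subset_convexHull
  refine ⟨⟨j.toNat, by omega⟩, ?_⟩
  simp [h0]

lemma pur_extreme (n : ℕ) (j : ℤ) (h0 : 0 ≤ j) (h1 : j < n) :
    pur n j ∈ Set.extremePoints ℝ (Omega n) := by
  refine ⟨pur_mem n j h0 h1, ?_⟩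
  rintro y hy z hz ⟨a, b, ha, hb, hab, h⟩
  obtain ⟨hy2, hy⟩ := Omega_z n y hy
  obtain ⟨hz2, hz⟩ := Omega_z n z hz
  have hx : (pur n j) 0 ^ 2 + (pur n j) 1 ^ 2 = rn n ^ 2 := by
    simp only [pur, Matrix.cons_val_zero, Matrix.cons_val_one]
    have := Real.sin_sq_add_cos_sq (2 * π * j / n)
    linear_combination (rn n ^ 2) * this
  rw [← h] at hx
  simp only [Pi.add_apply, Pi.smul_apply, smul_eq_mul] at hx
  have key : (y 0 - z 0)^2 + (y 1 - z 1)^2 ≤ 0 := by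
    have hab' : 0 < a * b := mul_pos ha hb
    have : a * b * ((y 0 - z 0)^2 + (y 1 - z 1)^2) ≤ 0 := by
      obtain rfl : b = 1 - a := by linarith
      nlinarith [mul_le_mul_of_nonneg_left hy ha.le, mul_le_mul_of_nonneg_left hz hb.le]
    by_contra hcon
    push Not at hcon
    nlinarith [mul_pos hab' hcon]
  have k0 : y 0 = z 0 := by nlinarith [sq_nonneg (y 0 - z 0), sq_nonneg (y 1 - z 1)]
  have k1 : y 1 = z 1 := by nlinarith [sq_nonneg (y 0 - z 0), sq_nonneg (y 1 - z 1)]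
  have hyz : y = z := by
    ext i; fin_cases i
    · exact k0
    · exact k1
    · exact hy2.trans hz2.symm
  rw [← h, ← hyz, ← add_smul, hab, one_smul]

lemma effO_isEffect (n : ℕ) (hn : 5 ≤ n) (hodd : Odd n) (i : ℤ) (h0 : 0 ≤ i) (h1 : i < n) :
    IsEffect (Omega n) (effO n i) := by
  intro x hx
  have hc : Convex ℝ {x : V3 | 0 ≤ effO n i x ∧ effO n i x ≤ 1} := by
    rintro x ⟨hx, hx'⟩ y ⟨hy, hy'⟩ a b ha hb hab
    simp only [Set.mem_ofPred_eq, map_add, map_smul, smul_eq_mul]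
    constructor
    · positivity
    · nlinarith
  refine convexHull_min ?_ hc hx
  rintro _ ⟨j, rfl⟩
  have hj := j.2
  have hr := rn_sq n hn
  have hcp := cos_pi_div_pos n hn
  have g1 := cos_ge n hn hodd (i - (j:ℕ)) (by rw [abs_lt]; constructor <;> omega)
  have g2 := Real.cos_le_one (2*π*((i - (j:ℕ) : ℤ):ℝ)/n)
  have hrp : 0 < rn n ^ 2 := by rw [hr]; positivity
  have hrc : rn n ^ 2 * Real.cos (π / n) = 1 := by rw [hr]; field_simp
  simp only [Set.mem_ofPred_eq, effO_pur]
  constructor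
  · apply mul_nonneg (by positivity)
    nlinarith
  · rw [one_div_mul_eq_div, div_le_one (by positivity)]
    nlinarith

lemma mix2 (Ω : Set V3) (hΩ : ∀ x ∈ Ω, x 2 = 1) (S : V3 → ℝ) (hS : IsEntropyOfMixing Ω S)
    (x y : V3) (hx : x ∈ Ω) (hy : y ∈ Ω) (e : V3 →ₗ[ℝ] ℝ) (he : IsEffect Ω e)
    (hex : e x = 1) (hey : e y = 0) (p : ℝ) (hp0 : 0 ≤ p) (hp1 : p ≤ 1) :
    S (p • x + (1-p) • y) = p * S x + (1-p) * S y + H p := by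
  have := hS.2 2 ![x, y] (by intro j; fin_cases j <;> simp [hx, hy])
    ⟨![e, uEff - e], by
      intro i; fin_cases i
      · exact he
      · intro ω hω
        have := he ω hω
        have h2 := hΩ ω hω
        simp [uEff, h2, this], by simp, by
      intro i j
      fin_cases i <;> fin_cases j <;> simp [hex, hey, uEff, hΩ x hx, hΩ y hy]⟩
    ![p, 1-p] (by intro i; fin_cases i <;> simp [hp0, hp1]) (by simp)
  simp only [Fin.sum_univ_two, Matrix.cons_val_zero, Matrix.cons_val_one] at this
  rw [this, H]; ring

/-- The forced edge function. -/
def Fedge (a s : ℝ) : ℝ :=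
  -((1-a) * s * Real.log s) + a * s * Real.log a
    - (1 - (1-a)*s) * Real.log (1 - (1-a)*s)

lemma edge_value (a s T U : ℝ) (ha0 : 0 < a) (ha1 : a < 1) (hs0 : 0 < s) (hs1 : s < 1)
    (h1 : U = H (s/(1+a*s)))
    (h2 : U = (1 - a * (s/(1+a*s))) * T + H (a * (s/(1+a*s)))) : T = Fedge a s := by
  have has : 0 < a * s := by positivity
  have hd : 0 < 1 + a * s := by positivity
  have hw : 0 < 1 - (1-a)*s := by nlinarith
  have e1 : 1 - a * (s/(1+a*s)) = 1/(1+a*s) := by field_simp; ring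
  have e2 : 1 - s/(1+a*s) = (1 - (1-a)*s)/(1+a*s) := by field_simp; ring
  have e3 : a * (s/(1+a*s)) = a * s / (1+a*s) := by ring
  have h3 := h1.symm.trans h2
  unfold H at h3
  rw [e1, e2, e3, Real.log_div hs0.ne' hd.ne', Real.log_div hw.ne' hd.ne',
    Real.log_div has.ne' hd.ne', Real.log_div one_ne_zero hd.ne',
    Real.log_mul ha0.ne' hs0.ne', Real.log_one] at h3
  unfold Fedge
  generalize Real.log (1 - (1-a)*s) = L1 at *
  generalize Real.log (1 + a*s) = L2 at *
  field_simp at h3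
  linarith

lemma Fedge_asymm (a : ℝ) (ha0 : 0 < a) (ha1 : a < 1) :
    ∃ s : ℝ, 0 < s ∧ s < 1 ∧ Fedge a s ≠ Fedge a (1-s) := by
  have hla : Real.log a < 0 := Real.log_neg ha0 ha1
  set K : ℝ := 2 + (1+a) * (-Real.log a) / (1-a) with hK
  have hb : 0 < 1 - a := by linarith
  have hKp : 0 < (1+a) * (-Real.log a) / (1-a) := by
    apply div_pos _ hb
    apply mul_pos <;> linarith
  have hKm : (1-a) * K = 2*(1-a) + (1+a) * (-Real.log a) := by
    rw [hK]; field_simp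
  refine ⟨Real.exp (-K), Real.exp_pos _, by rw [Real.exp_lt_one_iff]; linarith, ?_⟩
  have hs0 := Real.exp_pos (-K)
  have hs1 : Real.exp (-K) < 1 := by rw [Real.exp_lt_one_iff]; linarith
  have hl : Real.log (Real.exp (-K)) = -K := Real.log_exp _
  generalize Real.exp (-K) = s at *
  have g1 : Fedge a s ≥ (1-a)*s*K + a*s*Real.log a := by
    unfold Fedge
    have hw : 0 < 1 - (1-a)*s := by nlinarith
    have : Real.log (1 - (1-a)*s) ≤ 0 := Real.log_nonpos hw.le (by nlinarith)
    rw [hl]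
    nlinarith [mul_nonneg hw.le (neg_nonneg.2 this)]
  have g2 : Fedge a (1-s) ≤ (1-a)*s - s * Real.log a := by
    unfold Fedge
    have h1s : 0 < 1 - s := by linarith
    have t1 := Real.one_sub_inv_le_log_of_pos h1s
    have t2 : (1-s) * Real.log (1-s) ≥ -s := by
      have := mul_le_mul_of_nonneg_left t1 h1s.le
      rw [mul_sub, mul_inv_cancel₀ h1s.ne'] at this
      linarith
    have hw : 0 < 1 - (1-a)*(1-s) := by nlinarith
    have t3 : Real.log a ≤ Real.log (1 - (1-a)*(1-s)) := Real.log_le_log ha0 (by nlinarith)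
    have t4 := mul_le_mul_of_nonneg_left t3 hw.le
    have t5 := mul_le_mul_of_nonneg_left t2 hb.le
    nlinarith
  intro h
  have : s * ((1-a) * K + a * Real.log a) ≤ s * ((1-a) - Real.log a) := by
    rw [h] at g1; linarith
  have := le_of_mul_le_mul_left this hs0
  linarith

lemma edge_lemma (Ω : Set V3) (hconv : Convex ℝ Ω) (hΩ : ∀ x ∈ Ω, x 2 = 1) (S : V3 → ℝ)
    (hS : IsEntropyOfMixing Ω S) (A B C D : V3) (hA : A ∈ Ω) (hB : B ∈ Ω) (hC : C ∈ Ω)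
    (hD : D ∈ Ω) (sA : S A = 0) (sC : S C = 0) (sD : S D = 0)
    (e f : V3 →ₗ[ℝ] ℝ) (he : IsEffect Ω e) (hf : IsEffect Ω f)
    (eA : e A = 1) (eB : e B = 0) (eC : e C = 0) (fD : f D = 1) (fC : f C = 0)
    (a : ℝ) (ha0 : 0 < a) (ha1 : a < 1) (hDeq : D = a • A + B - a • C)
    (s : ℝ) (hs0 : 0 < s) (hs1 : s < 1) :
    S (s • B + (1-s) • C) = Fedge a s := by
  have hd : 0 < 1 + a * s := by positivity
  have hq1 : s/(1+a*s) ≤ 1 := by rw [div_le_one hd]; nlinarith [mul_pos ha0 hs0]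
  have hq0 : 0 ≤ s/(1+a*s) := by positivity
  have m1 := mix2 Ω hΩ S hS D C hD hC f hf fD fC (s/(1+a*s)) hq0 hq1
  have m2 := mix2 Ω hΩ S hS A (s • B + (1-s) • C) hA
    (hconv hB hC hs0.le (by linarith) (by ring)) e he eA (by simp [eB, eC])
    (a * (s/(1+a*s))) (by positivity) (by nlinarith)
  refine edge_value a s _ (S ((s/(1+a*s)) • D + (1 - s/(1+a*s)) • C)) ha0 ha1 hs0 hs1 ?_ ?_
  · rw [m1, sC, sD]; ring
  · have : (s/(1+a*s)) • D + (1 - s/(1+a*s)) • C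
        = (a * (s/(1+a*s))) • A + (1 - a * (s/(1+a*s))) • (s • B + (1-s) • C) := by
      rw [hDeq]
      ext i
      simp only [Pi.add_apply, Pi.smul_apply, Pi.sub_apply, smul_eq_mul]
      field_simp
      ring
    rw [this, m2, sA]; ring

/-- For every odd integer `n ≥ 5`, there is no entropy of mixing on `Ω_n`. -/
theorem stmt19 (n : ℕ) (hn : 5 ≤ n) (hodd : Odd n) :
    ¬ ∃ S : V3 → ℝ, IsEntropyOfMixing (Omega n) S := by
  rintro ⟨S, hS⟩
  have hodd' := hodd
  obtain ⟨m, hm⟩ := hodd'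
  have hn5 : (5:ℝ) ≤ n := by exact_mod_cast hn
  have hn0 : (n:ℝ) ≠ 0 := by linarith
  have hp := Real.pi_pos
  have hmn : 2 * (m:ℝ) = n - 1 := by rw [hm]; push_cast; ring
  have hcp := cos_pi_div_pos n hn
  have hr := rn_sq n hn
  have hrc : rn n ^ 2 * Real.cos (π / n) = 1 := by rw [hr]; field_simp
  have hθ0 : 0 < π / n := by positivity
  have hθ1 : π / n < π / 3 := by gcongr; linarith
  have hc1 : Real.cos (π/n) < 1 := by
    rw [← Real.cos_zero]
    exact Real.cos_lt_cos_of_nonneg_of_le_pi le_rfl (by linarith) hθ0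
  have hc2 : 1/2 < Real.cos (π/n) := by
    rw [← Real.cos_pi_div_three]
    exact Real.cos_lt_cos_of_nonneg_of_le_pi hθ0.le (by linarith) hθ1
  have hzero : ∀ i j : ℤ, Real.cos (2*π*(i-j : ℤ)/n) = - Real.cos (π/n) →
      effO n i (pur n j) = 0 := by
    intro i j h
    rw [effO_pur, h]
    rw [show rn n ^ 2 * -Real.cos (π / n) + 1 = 0 by linarith, mul_zero]
  have hone : ∀ i : ℤ, effO n i (pur n i) = 1 := by
    intro i
    have : 0 < 1 + rn n ^ 2 := by positivity
    rw [effO_pur]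
    simp
    field_simp
    ring
  -- the angles
  have aB : 2 * π * ((m:ℤ):ℝ) / n = π - π / n := by
    push_cast; field_simp; linarith
  have aC : 2 * π * ((m+1:ℤ):ℝ) / n = π / n + π := by
    push_cast; field_simp; linarith
  have aD : 2 * π * ((1:ℤ):ℝ) / n = 2 * (π / n) := by
    push_cast; field_simp
  have aE : 2 * π * ((2*m:ℤ):ℝ) / n = 2 * π - 2 * (π / n) := by
    push_cast; field_simp; linarith
  have hmem := pur_mem n
  have hS0 : ∀ j : ℤ, 0 ≤ j → j < n → S (pur n j) = 0 := fun j h0 h1 =>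
    hS.1 _ (pur_extreme n j h0 h1)
  have hE := effO_isEffect n hn hodd
  have hconv : Convex ℝ (Omega n) := convex_convexHull ℝ _
  have hz : ∀ x ∈ Omega n, x 2 = 1 := fun x hx => (Omega_z n x hx).1
  have z1 : effO n 0 (pur n m) = 0 := by
    apply hzero
    have : 2*π*((0-m : ℤ):ℝ)/n = -(π - π/n) := by rw [← aB]; push_cast; ring
    rw [this, Real.cos_neg, Real.cos_pi_sub]
  have z2 : effO n 0 (pur n (m+1)) = 0 := by
    apply hzero
    have : 2*π*((0-(m+1) : ℤ):ℝ)/n = -(π/n + π) := by rw [← aC]; push_cast; ring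
    rw [this, Real.cos_neg, Real.cos_add_pi]
  have z3 : effO n 1 (pur n (m+1)) = 0 := by
    apply hzero
    have : 2*π*((1-(m+1) : ℤ):ℝ)/n = -(π - π/n) := by rw [← aB]; push_cast; ring
    rw [this, Real.cos_neg, Real.cos_pi_sub]
  have z4 : effO n (2*m) (pur n m) = 0 := by
    apply hzero
    have : 2*π*((2*m-m : ℤ):ℝ)/n = (π - π/n) := by rw [← aB]; push_cast; ring
    rw [this, Real.cos_pi_sub]
  set a := 2 * Real.cos (π/n) - 1 with ha
  have ha0 : 0 < a := by linarith
  have ha1 : a < 1 := by linarith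
  have eD : pur n 1 = a • pur n 0 + pur n m - a • pur n (m+1) := by
    ext i
    fin_cases i
    · simp only [pur, aB, aC, aD, Real.cos_pi_sub, Real.cos_add_pi, Real.cos_two_mul]
      simp
      rw [ha]; ring
    · simp only [pur, aB, aC, aD, Real.sin_pi_sub, Real.sin_add_pi, Real.sin_two_mul]
      simp
      rw [ha]; ring
    · simp [pur]
  have eE : pur n (2*m) = a • pur n 0 + pur n (m+1) - a • pur n m := by
    ext i
    fin_cases i
    · simp only [pur, aB, aC, aE, Real.cos_pi_sub, Real.cos_add_pi, Real.cos_two_pi_sub,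
        Real.cos_two_mul]
      simp
      rw [ha]; ring
    · simp only [pur, aB, aC, aE, Real.sin_pi_sub, Real.sin_add_pi, Real.sin_two_pi_sub,
        Real.sin_two_mul]
      simp
      rw [ha]; ring
    · simp [pur]
  obtain ⟨s, hs0, hs1, hne⟩ := Fedge_asymm a ha0 ha1
  have r1 := edge_lemma (Omega n) hconv hz S hS (pur n 0) (pur n m) (pur n (m+1)) (pur n 1)
    (hmem _ (by omega) (by omega)) (hmem _ (by omega) (by omega)) (hmem _ (by omega) (by omega))
    (hmem _ (by omega) (by omega)) (hS0 _ (by omega) (by omega)) (hS0 _ (by omega) (by omega))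
    (hS0 _ (by omega) (by omega)) (effO n 0) (effO n 1) (hE _ (by omega) (by omega))
    (hE _ (by omega) (by omega)) (hone 0) z1 z2 (hone 1) z3 a ha0 ha1 eD s hs0 hs1
  have r2 := edge_lemma (Omega n) hconv hz S hS (pur n 0) (pur n (m+1)) (pur n m) (pur n (2*m))
    (hmem _ (by omega) (by omega)) (hmem _ (by omega) (by omega)) (hmem _ (by omega) (by omega))
    (hmem _ (by omega) (by omega)) (hS0 _ (by omega) (by omega)) (hS0 _ (by omega) (by omega))
    (hS0 _ (by omega) (by omega)) (effO n 0) (effO n (2*m)) (hE _ (by omega) (by omega))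
    (hE _ (by omega) (by omega)) (hone 0) z2 z1 (hone _) z4 a ha0 ha1 eE (1-s) (by linarith)
    (by linarith)
  apply hne
  rw [← r1, ← r2, sub_sub_cancel, add_comm]
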